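/- Let Q_1 and Q_2 be QGPs and let S be a POM match relation witnessing Q_1 ▷ Q_2. Then for every data graph G with Q_1 ≺_c G and every pair (u_1,u_2) ∈ S, the match result satisfies M^G_{Q_1}(u_1) ⊆ M^G_{Q_2}(u_2). -/

import Mathlib

/-! Formalization of graph patterns from "Revisited Containment for Graph Patterns".
Labels are modeled as natural numbers, attribute names as naturals, attribute
values as integers. -/

/-- Comparison operators allowed in atomic attribute constraints. -/
inductive AOp : Type
  | ge | le | eq | ne
deriving DecidableEq

/-- `AOp.holds op c' c` : the value `c'` satisfies the constraint `_ op c`. -/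
def AOp.holds : AOp → ℤ → ℤ → Prop
  | .ge, c', c => c' ≥ c
  | .le, c', c => c' ≤ c
  | .eq, c', c => c' = c
  | .ne, c', c => c' ≠ c

/-- A finite conjunction of atomic constraints `A op c`. -/
abbrev AttrConstraints := Finset (ℕ × AOp × ℤ)

/-- `A(v) ∼ A_P(u)` : the attribute values of a data node (a partial map from
attribute names to values) match the attribute constraints of a pattern node. -/
def attrMatch (a : ℕ → Option ℤ) (P : AttrConstraints) : Prop :=
  ∀ c ∈ P, ∃ c', a c.1 = some c' ∧ c.2.1.holds c' c.2.2

/-- `A_1(u_1) ∼ A_2(u_2)` : the constraints over each attribute in `P2` are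
entailed by those over the same attribute in `P1`. -/
def constrEntails (P1 P2 : AttrConstraints) : Prop :=
  ∀ c2 ∈ P2, ∀ x : ℤ,
    (∀ c1 ∈ P1, c1.1 = c2.1 → c1.2.1.holds x c1.2.2) → c2.2.1.holds x c2.2.2

/-- A data graph: finite node set, directed edges, labels on nodes and edges,
and a partial attribute-value map on nodes. -/
structure DataGraph (V : Type) where
  nodes : Finset V
  edges : Finset (V × V)
  nlabel : V → ℕ
  elabel : V × V → ℕ
  attr : V → ℕ → Option ℤ

/-- Well-formedness of a data graph: edges connect nodes. -/
def DataGraph.WellFormed {V : Type} (G : DataGraph V) : Prop :=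
  ∀ e ∈ G.edges, e.1 ∈ G.nodes ∧ e.2 ∈ G.nodes

/-- `Gs` is a subgraph of `G`. -/
def IsSubgraph {V : Type} (Gs G : DataGraph V) : Prop :=
  Gs.WellFormed ∧ Gs.nodes ⊆ G.nodes ∧ Gs.edges ⊆ G.edges ∧
  (∀ v ∈ Gs.nodes, Gs.nlabel v = G.nlabel v ∧ Gs.attr v = G.attr v) ∧
  (∀ e ∈ Gs.edges, Gs.elabel e = G.elabel e)

/-- A quantified graph pattern (QGP): nodes, edges, labels, attribute
constraints on nodes and counting quantifiers on edges. -/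
structure QGP (V : Type) where
  nodes : Finset V
  edges : Finset (V × V)
  nlabel : V → ℕ
  elabel : V × V → ℕ
  attrC : V → AttrConstraints
  cq : V × V → ℕ

/-- Undirected adjacency in a pattern. -/
def QGP.Adj {V : Type} (Q : QGP V) (u w : V) : Prop :=
  (u, w) ∈ Q.edges ∨ (w, u) ∈ Q.edges

/-- Well-formedness of a QGP: edges connect nodes, counting quantifiers are
at least 1, and the pattern is connected. -/
def QGP.WellFormed {V : Type} (Q : QGP V) : Prop :=
  (∀ e ∈ Q.edges, e.1 ∈ Q.nodes ∧ e.2 ∈ Q.nodes) ∧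
  (∀ e ∈ Q.edges, 1 ≤ Q.cq e) ∧
  (∀ u ∈ Q.nodes, ∀ w ∈ Q.nodes, Relation.ReflTransGen Q.Adj u w)

/-- A POM (pattern-only matching) match relation of `Q1` in `Q2`:
conditions (1)–(3) of Definition of pattern-only matching. -/
def IsPOMRel {V1 V2 : Type} (Q1 : QGP V1) (Q2 : QGP V2) (S : Set (V1 × V2)) : Prop :=
  (∀ p ∈ S, p.1 ∈ Q1.nodes ∧ p.2 ∈ Q2.nodes) ∧
  (∀ p ∈ S, Q1.nlabel p.1 = Q2.nlabel p.2 ∧ constrEntails (Q1.attrC p.1) (Q2.attrC p.2)) ∧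
  (∀ p ∈ S, ∀ w2, (w2, p.2) ∈ Q2.edges →
      ∃ w1, (w1, p.1) ∈ Q1.edges ∧ (w1, w2) ∈ S ∧
        Q1.elabel (w1, p.1) = Q2.elabel (w2, p.2)) ∧
  (∀ p ∈ S, ∀ w2, (p.2, w2) ∈ Q2.edges →
      ∃ w1, (p.1, w1) ∈ Q1.edges ∧ (w1, w2) ∈ S ∧
        Q1.elabel (p.1, w1) = Q2.elabel (p.2, w2) ∧
        Q2.cq (p.2, w2) ≤ Q1.cq (p.1, w1))

/-- `Q1 ▷ Q2` : `Q1` matches `Q2` (pattern-only matching). -/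
def POM {V1 V2 : Type} (Q1 : QGP V1) (Q2 : QGP V2) : Prop :=
  ∃ S : Set (V1 × V2), IsPOMRel Q1 Q2 S ∧ ∀ u2 ∈ Q2.nodes, ∃ u1, (u1, u2) ∈ S

/-- A conditional-simulation relation of a QGP `Q` in a data graph `G`
(conditions (1)–(3) of conditional simulation). -/
def IsSimRel {VP VD : Type} (Q : QGP VP) (G : DataGraph VD) (S : Set (VP × VD)) : Prop :=
  (∀ p ∈ S, p.1 ∈ Q.nodes ∧ p.2 ∈ G.nodes) ∧
  (∀ p ∈ S, Q.nlabel p.1 = G.nlabel p.2 ∧ attrMatch (G.attr p.2) (Q.attrC p.1)) ∧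
  (∀ p ∈ S, ∀ u', (p.1, u') ∈ Q.edges →
      ∃ T : Finset VD, Q.cq (p.1, u') ≤ T.card ∧
        ∀ v' ∈ T, (p.2, v') ∈ G.edges ∧
          G.elabel (p.2, v') = Q.elabel (p.1, u') ∧ (u', v') ∈ S) ∧
  (∀ p ∈ S, ∀ u', (u', p.1) ∈ Q.edges →
      ∃ v', (v', p.2) ∈ G.edges ∧
        G.elabel (v', p.2) = Q.elabel (u', p.1) ∧ (u', v') ∈ S)

/-- `Q ≺_c G` via the relation `S` (conditions (1)–(4)). -/
def QGP.MatchesVia {VP VD : Type} (Q : QGP VP) (G : DataGraph VD)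
    (S : Set (VP × VD)) : Prop :=
  IsSimRel Q G S ∧ ∀ u ∈ Q.nodes, ∃ v, (u, v) ∈ S

/-- `Q ≺_c G` : the data graph `G` matches the QGP `Q` via conditional simulation. -/
def QGP.Matches {VP VD : Type} (Q : QGP VP) (G : DataGraph VD) : Prop :=
  ∃ S : Set (VP × VD), Q.MatchesVia G S

/-- The maximum conditional-simulation relation `S^G_Q` of a QGP in a data graph. -/
def QGP.maxRel {VP VD : Type} (Q : QGP VP) (G : DataGraph VD) : Set (VP × VD) :=
  ⋃₀ {S | IsSimRel Q G S}

/-- The match result `M^G_Q` on pattern nodes (∅ when `Q ⊀_c G`). -/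
def QGP.MN {VP VD : Type} (Q : QGP VP) (G : DataGraph VD) (u : VP) : Set VD :=
  {v | Q.Matches G ∧ (u, v) ∈ Q.maxRel G}

/-- The match result `M^G_Q` on pattern edges (∅ when `Q ⊀_c G`). -/
def QGP.ME {VP VD : Type} (Q : QGP VP) (G : DataGraph VD) (e : VP × VP) : Set (VD × VD) :=
  {d | Q.Matches G ∧ d ∈ G.edges ∧ (e.1, d.1) ∈ Q.maxRel G ∧
      (e.2, d.2) ∈ Q.maxRel G ∧ G.elabel d = Q.elabel e}

/-- A data node `v` satisfies a predicate (a QGP with query focus `u`) in `G`: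
there is a subgraph of `G` matching the predicate via a relation containing `(u,v)`. -/
def SatPred {VP VD : Type} (Q : QGP VP) (G : DataGraph VD) (u : VP) (v : VD) : Prop :=
  ∃ (Gs : DataGraph VD) (S : Set (VP × VD)),
    IsSubgraph Gs G ∧ Q.MatchesVia Gs S ∧ (u, v) ∈ S

/-- The shape (nodes, edges, query focus) of a predicate of a CGP. -/
structure PredShape (V : Type) where
  nodes : Finset V
  edges : Finset (V × V)
  focus : V

/-- A conditional graph pattern (CGP): global labelling/attribute/quantifier
data, a core, and finite sets of positive and negative predicates, each with
its query focus. -/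
structure CGP (V : Type) where
  nlabel : V → ℕ
  elabel : V × V → ℕ
  attrC : V → AttrConstraints
  cq : V × V → ℕ
  coreNodes : Finset V
  coreEdges : Finset (V × V)
  pos : Finset (PredShape V)
  neg : Finset (PredShape V)

/-- The core of a CGP, as a QGP. -/
def CGP.coreQGP {V : Type} (C : CGP V) : QGP V :=
  ⟨C.coreNodes, C.coreEdges, C.nlabel, C.elabel, C.attrC, C.cq⟩

/-- A predicate of a CGP, as a QGP. -/
def CGP.predQGP {V : Type} (C : CGP V) (q : PredShape V) : QGP V :=
  ⟨q.nodes, q.edges, C.nlabel, C.elabel, C.attrC, C.cq⟩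

/-- The set `E⁺` of edges of positive predicates. -/
def CGP.posEdges {V : Type} [DecidableEq V] (C : CGP V) : Finset (V × V) :=
  C.pos.biUnion (·.edges)

/-- The set `E⁻` of edges of negative predicates. -/
def CGP.negEdges {V : Type} [DecidableEq V] (C : CGP V) : Finset (V × V) :=
  C.neg.biUnion (·.edges)

/-- The positive version `C⁺` of a CGP: the QGP with nodes `V ∪ V⁺`
and edges `E ∪ E⁺`. -/
def CGP.posVersion {V : Type} [DecidableEq V] (C : CGP V) : QGP V :=
  ⟨C.coreNodes ∪ C.pos.biUnion (·.nodes), C.coreEdges ∪ C.posEdges,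
   C.nlabel, C.elabel, C.attrC, C.cq⟩

/-- Well-formedness of a CGP: the core and each predicate are well-formed QGPs,
each predicate's query focus is a core node, and each predicate shares with the
core exactly its focus node. -/
def CGP.WellFormed {V : Type} [DecidableEq V] (C : CGP V) : Prop :=
  C.coreQGP.WellFormed ∧
  (∀ q ∈ C.pos, (C.predQGP q).WellFormed ∧ q.focus ∈ C.coreNodes ∧
    q.focus ∈ q.nodes ∧ q.nodes ∩ C.coreNodes = {q.focus}) ∧
  (∀ q ∈ C.neg, (C.predQGP q).WellFormed ∧ q.focus ∈ C.coreNodes ∧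
    q.focus ∈ q.nodes ∧ q.nodes ∩ C.coreNodes = {q.focus})

/-- A conditional-simulation relation of a CGP `C` in a data graph `G`:
conditions (1)–(3) on the core plus conditions (4)–(5) on predicates. -/
def IsCondSimRel {V D : Type} (C : CGP V) (G : DataGraph D) (S : Set (V × D)) : Prop :=
  IsSimRel C.coreQGP G S ∧
  (∀ p ∈ S, ∀ q ∈ C.pos, q.focus = p.1 → SatPred (C.predQGP q) G p.1 p.2) ∧
  (∀ p ∈ S, ∀ q ∈ C.neg, q.focus = p.1 → ¬ SatPred (C.predQGP q) G p.1 p.2)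

/-- `C ≺_c G` : the data graph `G` matches the CGP `C` via conditional simulation. -/
def CGP.Matches {V D : Type} (C : CGP V) (G : DataGraph D) : Prop :=
  ∃ S : Set (V × D), IsCondSimRel C G S ∧ ∀ u ∈ C.coreNodes, ∃ v, (u, v) ∈ S

/-- The maximum conditional-simulation relation `S^G_C` of a CGP in a data graph. -/
def CGP.maxRel {V D : Type} (C : CGP V) (G : DataGraph D) : Set (V × D) :=
  ⋃₀ {S | IsCondSimRel C G S}

/-- The match result `M^G_C` on core nodes (∅ when `C ⊀_c G`). -/
def CGP.MN {V D : Type} (C : CGP V) (G : DataGraph D) (u : V) : Set D :=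
  {v | C.Matches G ∧ (u, v) ∈ C.maxRel G}

/-- The match result `M^G_C` on core edges (∅ when `C ⊀_c G`). -/
def CGP.ME {V D : Type} (C : CGP V) (G : DataGraph D) (e : V × V) : Set (D × D) :=
  {d | C.Matches G ∧ d ∈ G.edges ∧ (e.1, d.1) ∈ C.maxRel G ∧
      (e.2, d.2) ∈ C.maxRel G ∧ G.elabel d = C.elabel e}

/-- Traditional containment `C1 ⊑ C2` via the mapping `λ` (given by `lamN` on
core nodes, `lamE` on core edges): over every data graph, every match of a core
node (edge) of `C1` is a match of some node (edge) in its image under `λ`. -/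
def TradContainedVia {V1 V2 : Type} (C1 : CGP V1) (C2 : CGP V2)
    (lamN : V1 → Set V2) (lamE : V1 × V1 → Set (V2 × V2)) : Prop :=
  (∀ u ∈ C1.coreNodes, lamN u ⊆ ↑C2.coreNodes) ∧
  (∀ e ∈ C1.coreEdges, lamE e ⊆ ↑C2.coreEdges) ∧
  ∀ (D : Type) (G : DataGraph D), G.WellFormed →
    (∀ u ∈ C1.coreNodes, C1.MN G u ⊆ ⋃ u' ∈ lamN u, C2.MN G u') ∧
    (∀ e ∈ C1.coreEdges, C1.ME G e ⊆ ⋃ e' ∈ lamE e, C2.ME G e')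

/-- Conditions (★) on a relation `S` between `C1⁺` and `C2⁺`. -/
def StarCond {V1 V2 : Type} [DecidableEq V1] [DecidableEq V2]
    (C1 : CGP V1) (C2 : CGP V2) (S : Set (V1 × V2)) : Prop :=
  -- (1) S is a POM match relation witnessing C1⁺ ▷ C2⁺
  IsPOMRel C1.posVersion C2.posVersion S ∧
  (∀ u2 ∈ C2.posVersion.nodes, ∃ u1, (u1, u2) ∈ S) ∧
  -- (2) negative predicates of C2 are matched by negative predicates of C1
  (∀ p ∈ S, ∀ q2 ∈ C2.neg, q2.focus = p.2 →
      ∃ q1 ∈ C1.neg, q1.focus = p.1 ∧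
        ∃ S' : Set (V2 × V1), IsPOMRel (C2.predQGP q2) (C1.predQGP q1) S' ∧
          (∀ w1 ∈ q1.nodes, ∃ w2, (w2, w1) ∈ S') ∧ (p.2, p.1) ∈ S') ∧
  -- (3) core nodes and core edges of C1 are matched to core nodes/edges of C2
  (∀ u1 ∈ C1.coreNodes, ∃ u2 ∈ C2.coreNodes, (u1, u2) ∈ S) ∧
  (∀ e1 ∈ C1.coreEdges, ∃ e2 ∈ C2.coreEdges, (e1.1, e2.1) ∈ S ∧ (e1.2, e2.2) ∈ S)

/-- The mapping `λ` on core nodes induced by a match relation `S`. -/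
def inducedLamN {V1 V2 : Type} (C2 : CGP V2) (S : Set (V1 × V2)) (u : V1) : Set V2 :=
  {u2 | u2 ∈ C2.coreNodes ∧ (u, u2) ∈ S}

/-- The mapping `λ` on core edges induced by a match relation `S`. -/
def inducedLamE {V1 V2 : Type} (C2 : CGP V2) (S : Set (V1 × V2))
    (e : V1 × V1) : Set (V2 × V2) :=
  {e2 | e2 ∈ C2.coreEdges ∧ (e.1, e2.1) ∈ S ∧ (e.2, e2.2) ∈ S}

/-- The data nodes occurring in the match result of `C` over `G`. -/
def NodesInResult {V D : Type} (C : CGP V) (G : DataGraph D) : Set D :=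
  ⋃ u ∈ C.coreNodes, C.MN G u

/-- Two data graphs have the same match result for `C`. -/
def MatchResultsAgree {V D : Type} (C : CGP V) (G G' : DataGraph D) : Prop :=
  (∀ u ∈ C.coreNodes, C.MN G u = C.MN G' u) ∧
  (∀ e ∈ C.coreEdges, C.ME G e = C.ME G' e)

/-- `G` and `G'` are data graphs over the same node set that agree on the labels
and attribute values of all nodes occurring in their match results of `C2`, and
have the same match result of `C2`. -/
def GraphsAgreeFor {V2 D : Type} (C2 : CGP V2) (G G' : DataGraph D) : Prop :=
  G.nodes = G'.nodes ∧
  (∀ v ∈ NodesInResult C2 G ∪ NodesInResult C2 G',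
      G.nlabel v = G'.nlabel v ∧ G.attr v = G'.attr v) ∧
  MatchResultsAgree C2 G G'

/-- A predicate `q` of `C1` (with query focus `q.focus`) is evaluable over a set
`lam` of core nodes of `C2`: for every data graph and every node in the
intersection of the match sets of `lam`, satisfaction of the predicate is
determined by the match result of `C2` (together with labels and attribute
values of the nodes occurring in it). -/
def Evaluable {V1 V2 : Type} (C1 : CGP V1) (C2 : CGP V2)
    (lam : Set V2) (q : PredShape V1) : Prop :=
  ∀ (D : Type) (G G' : DataGraph D), G.WellFormed → G'.WellFormed →
    GraphsAgreeFor C2 G G' →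
    ∀ v, v ∈ ⋂ u' ∈ lam, C2.MN G u' →
      (SatPred (C1.predQGP q) G q.focus v ↔ SatPred (C1.predQGP q) G' q.focus v)

/-- `r` is (a part of) a positive predicate of `C`, with the same query focus. -/
def IsPartOfPos {V : Type} (C : CGP V) (r : PredShape V) : Prop :=
  ∃ q ∈ C.pos, r.nodes ⊆ q.nodes ∧ r.edges ⊆ q.edges ∧ r.focus = q.focus

/-- A containment match relation between two QGPs: a POM match relation
witnessing `Q1 ▷ Q2` in which moreover every node and edge of `Q1` is matched
to some node/edge of `Q2`. -/
def QGPContainRel {V1 V2 : Type} (Q1 : QGP V1) (Q2 : QGP V2)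
    (S : Set (V1 × V2)) : Prop :=
  IsPOMRel Q1 Q2 S ∧ (∀ u2 ∈ Q2.nodes, ∃ u1, (u1, u2) ∈ S) ∧
  (∀ u1 ∈ Q1.nodes, ∃ u2 ∈ Q2.nodes, (u1, u2) ∈ S) ∧
  (∀ e1 ∈ Q1.edges, ∃ e2 ∈ Q2.edges, (e1.1, e2.1) ∈ S ∧ (e1.2, e2.2) ∈ S)

/-- Remove the attribute constraints on the query focus `u`. -/
def QGP.removeFocusAttr {V : Type} [DecidableEq V] (Q : QGP V) (u : V) : QGP V :=
  { Q with attrC := fun w => if w = u then (∅ : AttrConstraints) else Q.attrC w }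

/-- `Q1(u1) ≡ Q2(u2)` : equivalence of QGPs with query foci — mutual containment
(after dropping the attribute constraints on the foci) via maximum match
relations that relate the two foci. -/
def FocusEquiv {V1 V2 : Type} [DecidableEq V1] [DecidableEq V2]
    (Q1 : QGP V1) (u1 : V1) (Q2 : QGP V2) (u2 : V2) : Prop :=
  ∃ (S12 : Set (V1 × V2)) (S21 : Set (V2 × V1)),
    QGPContainRel (Q1.removeFocusAttr u1) (Q2.removeFocusAttr u2) S12 ∧
    (∀ S, QGPContainRel (Q1.removeFocusAttr u1) (Q2.removeFocusAttr u2) S → S ⊆ S12) ∧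
    QGPContainRel (Q2.removeFocusAttr u2) (Q1.removeFocusAttr u1) S21 ∧
    (∀ S, QGPContainRel (Q2.removeFocusAttr u2) (Q1.removeFocusAttr u1) S → S ⊆ S21) ∧
    (u1, u2) ∈ S12 ∧ (u2, u1) ∈ S21

/-- The refinement relation `R⁺` for positive predicates determined by `S`. -/
def Rplus {V1 V2 : Type} [DecidableEq V1] (C1 : CGP V1) (C2 : CGP V2)
    (S : Set (V1 × V2)) : Set ((V1 × V1) × (V2 × V2)) :=
  {p | p.1 ∈ C1.posEdges ∧ p.2 ∈ C2.coreEdges ∧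
       (p.1.1, p.2.1) ∈ S ∧ (p.1.2, p.2.2) ∈ S}

/-- The elimination relation `E⁺` for positive predicates determined by `S`. -/
def Eplus {V1 V2 : Type} [DecidableEq V1] [DecidableEq V2]
    (C1 : CGP V1) (C2 : CGP V2) (S : Set (V1 × V2)) :
    Set (PredShape V1 × V2) :=
  {p | IsPartOfPos C1 p.1 ∧ (p.1.focus, p.2) ∈ S ∧ p.2 ∈ C2.coreNodes ∧
       (∃ r2 : PredShape V2, IsPartOfPos C2 r2 ∧ r2.focus = p.2 ∧
          FocusEquiv (C1.predQGP p.1) p.1.focus (C2.predQGP r2) r2.focus) ∧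
       (∀ e ∈ C1.posEdges, e ∉ p.1.edges →
          (e.1 ∈ p.1.nodes → e.1 = p.1.focus) ∧
          (e.2 ∈ p.1.nodes → e.2 = p.1.focus))}

/-- `u1 ∼ u2` for pattern nodes of two CGPs: equal labels and entailed
attribute constraints. -/
def NodeSimC {V1 V2 : Type} (C1 : CGP V1) (C2 : CGP V2) (u1 : V1) (u2 : V2) : Prop :=
  C1.nlabel u1 = C2.nlabel u2 ∧ constrEntails (C1.attrC u1) (C2.attrC u2)

/-- `e ∼ e'` for pattern edges of two CGPs: matching endpoints, equal edge
labels, and counting quantifier of `e` at least that of `e'`. -/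
def EdgeSimC {V1 V2 : Type} (C1 : CGP V1) (C2 : CGP V2)
    (e : V1 × V1) (e' : V2 × V2) : Prop :=
  NodeSimC C1 C2 e.1 e'.1 ∧ NodeSimC C1 C2 e.2 e'.2 ∧
  C1.elabel e = C2.elabel e' ∧ C2.cq e' ≤ C1.cq e

/-- Two directed edges intersect in some node (for undirected paths). -/
def EdgesTouch {V : Type} (e f : V × V) : Prop :=
  e.1 = f.1 ∨ e.1 = f.2 ∨ e.2 = f.1 ∨ e.2 = f.2

/-- An undirected path among the edges `E`, starting at the node `u`. -/
def IsUPath {V : Type} (E : Set (V × V)) (u : V) (l : List (V × V)) : Prop :=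
  (∀ e ∈ l, e ∈ E) ∧ List.Chain' EdgesTouch l ∧
  (∀ e, l.head? = some e → (e.1 = u ∨ e.2 = u))

/-- The refinement relation `R⁻` for negative predicates determined by `S`:
`(e, e')` with `e` an edge of a negative predicate of `C1`, `e'` a core edge of
`C2`, `e ∼ e'`, and undirected paths from a pair `(u,w) ∈ S` leading to `e`
resp. `e'` whose corresponding edges are already in `R⁻`. -/
inductive InRminus {V1 V2 : Type} (C1 : CGP V1) (C2 : CGP V2)
    (S : Set (V1 × V2)) : (V1 × V1) → (V2 × V2) → Prop where
  | intro (e : V1 × V1) (e' : V2 × V2) (q : PredShape V1)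
      (hq : q ∈ C1.neg) (he : e ∈ q.edges) (he' : e' ∈ C2.coreEdges)
      (hsim : EdgeSimC C1 C2 e e')
      (u : V1) (w : V2) (huw : (u, w) ∈ S)
      (l1 : List (V1 × V1)) (l2 : List (V2 × V2)) (hlen : l1.length = l2.length)
      (hp1 : IsUPath (fun x => x ∈ q.edges) u (l1 ++ [e]))
      (hp2 : IsUPath (fun x => x ∈ C2.coreEdges) w (l2 ++ [e']))
      (hrec : ∀ i : Fin l1.length,
        InRminus C1 C2 S (l1.get i) (l2.get (Fin.cast hlen i))) :
      InRminus C1 C2 S e e'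

/-- The elimination relation `E⁻` for negative predicates determined by `S`. -/
def Eminus {V1 V2 : Type} [DecidableEq V1] [DecidableEq V2]
    (C1 : CGP V1) (C2 : CGP V2) (S : Set (V1 × V2)) :
    Set (PredShape V1 × V2) :=
  {p | p.1 ∈ C1.neg ∧ (p.1.focus, p.2) ∈ S ∧
       ∃ q2 ∈ C2.neg, q2.focus = p.2 ∧
         FocusEquiv (C1.predQGP p.1) p.1.focus (C2.predQGP q2) q2.focus}

/-!
Composing a POM match relation with a conditional simulation of `Q1` in `G` gives a conditional
simulation of `Q2` in `G`. The delicate point is that an attribute constrained in `Q2` has to be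
defined on the data node, while entailment only speaks about its values: since no atomic constraint
holds for every integer, an entailed constraint forces the entailing side to constrain the same
attribute, and a match of `Q1` then provides a value for it.
-/

theorem AOp.exists_not_holds (op : AOp) (c : ℤ) : ∃ x, ¬ op.holds x c := by
  cases op with
  | ge => exact ⟨c - 1, by simp [AOp.holds]⟩
  | le => exact ⟨c + 1, by simp [AOp.holds]⟩
  | eq => exact ⟨c + 1, by simp [AOp.holds]⟩
  | ne => exact ⟨c, by simp [AOp.holds]⟩

theorem constrEntails.exists_mem_fst_eq {P1 P2 : AttrConstraints} (h : constrEntails P1 P2)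
    {c2 : ℕ × AOp × ℤ} (hc2 : c2 ∈ P2) : ∃ c1 ∈ P1, c1.1 = c2.1 := by
  by_contra! hne
  obtain ⟨x, hx⟩ := c2.2.1.exists_not_holds c2.2.2
  exact hx (h c2 hc2 x fun c1 hc1 heq => absurd heq (hne c1 hc1))

theorem attrMatch.holds {a : ℕ → Option ℤ} {P : AttrConstraints} (h : attrMatch a P)
    {c : ℕ × AOp × ℤ} (hc : c ∈ P) {x : ℤ} (hx : a c.1 = some x) : c.2.1.holds x c.2.2 := by
  obtain ⟨y, hy, hholds⟩ := h c hc
  obtain rfl : x = y := Option.some_injective _ (hx.symm.trans hy)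
  exact hholds

theorem constrEntails.attrMatch {P1 P2 : AttrConstraints} (h : constrEntails P1 P2)
    {a : ℕ → Option ℤ} (ha : attrMatch a P1) : attrMatch a P2 := by
  intro c2 hc2
  obtain ⟨c1, hc1, heq⟩ := h.exists_mem_fst_eq hc2
  obtain ⟨x, hx, -⟩ := ha c1 hc1
  rw [heq] at hx
  exact ⟨x, hx, h c2 hc2 x fun c hc hname => ha.holds hc (hname ▸ hx)⟩

section Composition

open scoped SetRel

variable {V1 V2 D : Type} {Q1 : QGP V1} {Q2 : QGP V2} {G : DataGraph D}
  {S : SetRel V1 V2} {R : SetRel V1 D}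

theorem IsPOMRel.isSimRel_inv_comp (hS : IsPOMRel Q1 Q2 S) (hR : IsSimRel Q1 G R) :
    IsSimRel Q2 G (S.inv ○ R) := by
  obtain ⟨hS_nodes, hS_node, hS_parent, hS_child⟩ := hS
  obtain ⟨hR_nodes, hR_node, hR_child, hR_parent⟩ := hR
  refine ⟨?nodes, ?node, ?child, ?parent⟩
  case nodes =>
    rintro ⟨u2, v⟩ ⟨u1, hu, hv⟩
    exact ⟨(hS_nodes _ hu).2, (hR_nodes _ hv).2⟩
  case node =>
    rintro ⟨u2, v⟩ ⟨u1, hu, hv⟩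
    obtain ⟨hS_label, hentails⟩ := hS_node _ hu
    obtain ⟨hR_label, hattr⟩ := hR_node _ hv
    exact ⟨hS_label.symm.trans hR_label, hentails.attrMatch hattr⟩
  case child =>
    rintro ⟨u2, v⟩ ⟨u1, hu, hv⟩ w2 he2
    obtain ⟨w1, he1, hw, hlabel, hcq⟩ := hS_child _ hu w2 he2
    obtain ⟨T, hcard, hT⟩ := hR_child _ hv w1 he1
    refine ⟨T, hcq.trans hcard, fun v' hv' => ?_⟩
    obtain ⟨hedge, hlabel', hmem⟩ := hT v' hv'
    exact ⟨hedge, hlabel'.trans hlabel, w1, hw, hmem⟩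
  case parent =>
    rintro ⟨u2, v⟩ ⟨u1, hu, hv⟩ w2 he2
    obtain ⟨w1, he1, hw, hlabel⟩ := hS_parent _ hu w2 he2
    obtain ⟨v', hedge, hlabel', hmem⟩ := hR_parent _ hv w1 he1
    exact ⟨v', hedge, hlabel'.trans hlabel, w1, hw, hmem⟩

theorem IsPOMRel.inv_comp_maxRel_subset (hS : IsPOMRel Q1 Q2 S) :
    S.inv ○ Q1.maxRel G ⊆ Q2.maxRel G := by
  rintro ⟨u2, v⟩ ⟨u1, hu, R, hR, hv⟩
  exact ⟨S.inv ○ R, hS.isSimRel_inv_comp hR, u1, hu, hv⟩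

theorem POM.matches (h : POM Q1 Q2) (hM : Q1.Matches G) : Q2.Matches G := by
  obtain ⟨S, hS, hS_total⟩ := h
  obtain ⟨R, hR, hR_total⟩ := hM
  refine ⟨SetRel.inv S ○ R, hS.isSimRel_inv_comp hR, fun u2 hu2 => ?_⟩
  obtain ⟨u1, hu⟩ := hS_total u2 hu2
  obtain ⟨v, hv⟩ := hR_total u1 (hS.1 _ hu).1
  exact ⟨v, u1, hu, hv⟩

end Composition

/-- If `S` is a POM match relation witnessing `Q1 ▷ Q2`, then for
every data graph `G` with `Q1 ≺_c G` and every pair `(u1,u2) ∈ S`,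
`M^G_{Q1}(u1) ⊆ M^G_{Q2}(u2)`. -/
theorem pom_node_match_subset {V1 V2 D : Type} (Q1 : QGP V1) (Q2 : QGP V2)
    (hQ1 : Q1.WellFormed) (hQ2 : Q2.WellFormed)
    (S : Set (V1 × V2)) (hS : IsPOMRel Q1 Q2 S)
    (hcov : ∀ u2 ∈ Q2.nodes, ∃ u1, (u1, u2) ∈ S)
    (G : DataGraph D) (hG : G.WellFormed) (hM : Q1.Matches G)
    (u1 : V1) (u2 : V2) (hu : (u1, u2) ∈ S) :
    Q1.MN G u1 ⊆ Q2.MN G u2 := by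
  rintro v ⟨-, hv⟩
  have hM2 : Q2.Matches G := POM.matches ⟨S, hS, hcov⟩ hM
  have hmax : (u2, v) ∈ Q2.maxRel G := hS.inv_comp_maxRel_subset ⟨u1, hu, hv⟩
  exact ⟨hM2, hmax⟩
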